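/- Let R ⊆ ℤ² be obtained from S_0 = {(1,0),(0,1),(−1,0),(0,−1)} (the ray set of the fan of ℂP¹ × ℂP¹) by a finite sequence of toric blow-up steps. Then there exist a natural number j and a further finite sequence of toric blow-up steps taking R to the set S_j exactly. (Fan-level statement of: every iterated toric blow-up of ℂP¹ × ℂP¹ can be further blown up torus-equivariantly to become one of the surfaces X_j.) -/

import Mathlib

/-- The determinant `det(v,w) = v₁w₂ − v₂w₁` of a pair of lattice vectors. -/
def latDet (v w : ℤ × ℤ) : ℤ := v.1 * w.2 - v.2 * w.1

/-- `v, w ∈ S` form an adjacent pair of the fan with ray set `S` if `det(v,w) > 0` and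
no element of `S` lies in the open cone `{αv + βw : α > 0, β > 0, α, β ∈ ℝ}`. -/
def AdjacentPair (S : Set (ℤ × ℤ)) (v w : ℤ × ℤ) : Prop :=
  v ∈ S ∧ w ∈ S ∧ 0 < latDet v w ∧
    ∀ u ∈ S, ¬ ∃ α β : ℝ, 0 < α ∧ 0 < β ∧
      (u.1 : ℝ) = α * v.1 + β * w.1 ∧ (u.2 : ℝ) = α * v.2 + β * w.2

/-- A toric blow-up step replaces the ray set `S` by `S ∪ {v+w}` for an adjacent pair
`(v,w)` of `S`; this is the fan-level description of blowing up the torus fixed point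
corresponding to the two-dimensional cone spanned by `v` and `w`. -/
def BlowUpStep (S T : Set (ℤ × ℤ)) : Prop :=
  ∃ v w : ℤ × ℤ, AdjacentPair S v w ∧ T = S ∪ {v + w}

/-- `BlowUpSeq m S T` means `T` is obtained from `S` by a sequence of `m` toric
blow-up steps. -/
def BlowUpSeq : ℕ → Set (ℤ × ℤ) → Set (ℤ × ℤ) → Prop
  | 0, S, T => T = S
  | m + 1, S, T => ∃ R : Set (ℤ × ℤ), BlowUpSeq m S R ∧ BlowUpStep R T

/-- `Σ_n = {(0,−1),(1,0),(0,1),(−1,−n)}`, the set of ray generators of the fan of the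
Hirzebruch surface `F_n` (with `F_0 = ℂP¹ × ℂP¹`). -/
def hirzebruchFan (n : ℕ) : Set (ℤ × ℤ) :=
  {(0, -1), (1, 0), (0, 1), (-1, -(n : ℤ))}

/-- Mediant insertion: between each pair of consecutive entries insert their sum. -/
def mediantInsert : List (ℤ × ℤ) → List (ℤ × ℤ)
  | [] => []
  | [a] => [a]
  | a :: b :: t => a :: (a + b) :: mediantInsert (b :: t)

/-- The list `L_j`: `L_0 = [(1,0),(0,1)]` and `L_{j+1}` is obtained from `L_j` by
mediant insertion.  `L_j` encodes the rays of the fan of the toric surface `X_j`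
lying in the closed first quadrant, where `X_0 = ℂP¹ × ℂP¹` and `X_{j+1}` is the
blow-up of `X_j` at all of its torus fixed points. -/
def rayList : ℕ → List (ℤ × ℤ)
  | 0 => [(1, 0), (0, 1)]
  | j + 1 => mediantInsert (rayList j)

/-- The set `S_j = { (ε₁·a, ε₂·b) : (a,b) an entry of L_j, ε₁, ε₂ ∈ {1,−1} }`, the set
of primitive generators of the rays of the fan of the toric surface `X_j`. -/
def raySet (j : ℕ) : Set (ℤ × ℤ) :=
  {p | ∃ q ∈ rayList j, ∃ ε₁ ε₂ : ℤ, (ε₁ = 1 ∨ ε₁ = -1) ∧ (ε₂ = 1 ∨ ε₂ = -1) ∧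
    p = (ε₁ * q.1, ε₂ * q.2)}

lemma latDet_cone {v w u : ℤ × ℤ} (h : 0 < latDet v w) :
    (∃ α β : ℝ, 0 < α ∧ 0 < β ∧
      (u.1 : ℝ) = α * v.1 + β * w.1 ∧ (u.2 : ℝ) = α * v.2 + β * w.2) ↔
    0 < latDet v u ∧ 0 < latDet u w := by
  have hR : (0:ℝ) < (v.1:ℝ) * w.2 - v.2 * w.1 := by
    unfold latDet at h; exact_mod_cast h
  constructor
  · rintro ⟨α, β, ha, hb, h1, h2⟩
    constructor
    · have : (0:ℝ) < (v.1:ℝ) * u.2 - v.2 * u.1 := by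
        rw [h1, h2]
        have := mul_pos hb hR
        linarith
      unfold latDet; exact_mod_cast this
    · have : (0:ℝ) < (u.1:ℝ) * w.2 - u.2 * w.1 := by
        rw [h1, h2]
        have := mul_pos ha hR
        linarith
      unfold latDet; exact_mod_cast this
  · rintro ⟨h1, h2⟩
    have h1R : (0:ℝ) < (v.1:ℝ) * u.2 - v.2 * u.1 := by
      unfold latDet at h1; exact_mod_cast h1
    have h2R : (0:ℝ) < (u.1:ℝ) * w.2 - u.2 * w.1 := by
      unfold latDet at h2; exact_mod_cast h2
    have hne := hR.ne'
    refine ⟨((u.1:ℝ) * w.2 - u.2 * w.1) / ((v.1:ℝ) * w.2 - v.2 * w.1),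
      ((v.1:ℝ) * u.2 - v.2 * u.1) / ((v.1:ℝ) * w.2 - v.2 * w.1),
      div_pos h2R hR, div_pos h1R hR, ?_, ?_⟩
    · rw [div_mul_eq_mul_div, div_mul_eq_mul_div, ← add_div, eq_div_iff hne]; ring
    · rw [div_mul_eq_mul_div, div_mul_eq_mul_div, ← add_div, eq_div_iff hne]; ring

lemma adjacentPair_iff {S : Set (ℤ × ℤ)} {v w : ℤ × ℤ} :
    AdjacentPair S v w ↔ v ∈ S ∧ w ∈ S ∧ 0 < latDet v w ∧
      ∀ u ∈ S, ¬ (0 < latDet v u ∧ 0 < latDet u w) := by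
  unfold AdjacentPair
  constructor
  · rintro ⟨a, b, c, d⟩
    exact ⟨a, b, c, fun u hu h => d u hu ((latDet_cone c).2 h)⟩
  · rintro ⟨a, b, c, d⟩
    exact ⟨a, b, c, fun u hu h => d u hu ((latDet_cone c).1 h)⟩

def SQ (p q : ℤ × ℤ) : Prop := 0 ≤ p.1 * q.1 ∧ 0 ≤ p.2 * q.2

def axesSet : Set (ℤ × ℤ) := {(1, 0), (0, 1), (-1, 0), (0, -1)}

/-- every element is an axis or the sum of two parents in the set -/
def ParentClosed (R : Set (ℤ × ℤ)) : Prop :=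
  ∀ u ∈ R, u ∈ axesSet ∨ ∃ p ∈ R, ∃ q ∈ R, latDet p q = 1 ∧ SQ p q ∧ u = p + q

def nrm (x : ℤ × ℤ) : ℕ := x.1.natAbs + x.2.natAbs

lemma nrm_add {p q : ℤ × ℤ} (h : SQ p q) : nrm (p + q) = nrm p + nrm q := by
  have key : ∀ a b : ℤ, 0 ≤ a * b → (a + b).natAbs = a.natAbs + b.natAbs := by
    intro a b hab
    rcases mul_nonneg_iff.1 hab with ⟨_, _⟩ | ⟨_, _⟩ <;> omega
  unfold nrm
  rw [Prod.fst_add, Prod.snd_add, key _ _ h.1, key _ _ h.2]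
  omega

lemma nrm_pos_left {p q : ℤ × ℤ} (h : latDet p q = 1) : 0 < nrm p := by
  by_contra hn
  have h1 : p.1 = 0 := by unfold nrm at hn; omega
  have h2 : p.2 = 0 := by unfold nrm at hn; omega
  simp [latDet, h1, h2] at h

lemma nrm_pos_right {p q : ℤ × ℤ} (h : latDet p q = 1) : 0 < nrm q := by
  by_contra hn
  have h1 : q.1 = 0 := by unfold nrm at hn; omega
  have h2 : q.2 = 0 := by unfold nrm at hn; omega
  simp [latDet, h1, h2] at h

lemma coords_nonneg (a1 b1 a2 b2 l m : ℤ) (hl : 0 < l) (hm : 0 < m)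
    (hd : a1 * b2 - a2 * b1 = 1) (ha : 0 < a1 + a2) (hb : 0 < b1 + b2)
    (h1 : 0 < a1 * l + b1 * m) (h2 : 0 < a2 * l + b2 * m) :
    0 ≤ a1 ∧ 0 ≤ b1 ∧ 0 ≤ a2 ∧ 0 ≤ b2 := by
  have pos : ∀ a b : ℤ, 0 < a * l + b * m → a < 0 → 0 < b := by
    intro a b h hneg
    by_contra hb
    nlinarith
  have pos' : ∀ a b : ℤ, 0 < a * l + b * m → b < 0 → 0 < a := by
    intro a b h hneg
    by_contra hb
    nlinarith
  refine ⟨?_, ?_, ?_, ?_⟩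
  · by_contra h
    push Not at h
    have hb1 := pos _ _ h1 h
    have : b2 < 0 := by
      by_contra hh
      nlinarith
    nlinarith
  · by_contra h
    push Not at h
    have ha1 := pos' _ _ h1 h
    by_cases hh : 0 ≤ a2
    · nlinarith
    · nlinarith
  · by_contra h
    push Not at h
    have hb1 := pos _ _ h2 h
    by_cases hh : 0 ≤ b1
    · nlinarith
    · nlinarith
  · by_contra h
    push Not at h
    have ha1 := pos' _ _ h2 h
    by_cases hh : 0 ≤ a1
    · nlinarith
    · nlinarith

lemma expand {p q : ℤ × ℤ} (h : latDet p q = 1) (x : ℤ × ℤ) :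
    x.1 = latDet x q * p.1 + latDet p x * q.1 ∧ x.2 = latDet x q * p.2 + latDet p x * q.2 := by
  unfold latDet at *
  constructor
  · linear_combination (-x.1) * h
  · linear_combination (-x.2) * h

/-- A sign with which both summands become nonnegative. -/
lemma sign_aux (a b : ℤ) (h : 0 ≤ a * b) :
    ∃ s : ℤ, (s = 1 ∨ s = -1) ∧ 0 ≤ s * a ∧ 0 ≤ s * b := by
  rcases mul_nonneg_iff.1 h with ⟨_, _⟩ | ⟨_, _⟩
  · exact ⟨1, Or.inl rfl, by omega, by omega⟩
  · exact ⟨-1, Or.inr rfl, by omega, by omega⟩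

lemma sign_split (s a b : ℤ) (hs : s = 1 ∨ s = -1) (h : 0 ≤ a * b) (hp : 0 < s * (a + b)) :
    0 ≤ s * a ∧ 0 ≤ s * b := by
  rcases mul_nonneg_iff.1 h with ⟨_, _⟩ | ⟨_, _⟩ <;> rcases hs with rfl | rfl <;> omega

lemma sgn_comb_pos {s t p1 p2 q1 q2 : ℤ} (hs : s = 1 ∨ s = -1) (ht : t = 1 ∨ t = -1)
    (h1 : 0 ≤ s * p1) (h2 : 0 ≤ t * p2) (hd : p1 * q2 - p2 * q1 = 1) :
    0 < s * p1 + t * p2 := by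
  by_contra h
  have a : p1 = 0 := by rcases hs with rfl | rfl <;> omega
  have b : p2 = 0 := by rcases ht with rfl | rfl <;> omega
  subst a b
  simp at hd

lemma cone_interior {s a b p q p2 q2 : ℤ} (hs : s = 1 ∨ s = -1) (ha : 0 < a) (hb : 0 < b)
    (hp : 0 ≤ s * p) (hq : 0 ≤ s * q) (hd : p * q2 - p2 * q = 1) : 0 < s * (a * p + b * q) := by
  have e : s * (a * p + b * q) = a * (s * p) + b * (s * q) := by ring
  rw [e]
  rcases hp.eq_or_lt with h | h
  · rcases hq.eq_or_lt with h' | h'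
    · exfalso
      have a : p = 0 := by rcases hs with rfl | rfl <;> omega
      have b : q = 0 := by rcases hs with rfl | rfl <;> omega
      subst a b
      simp at hd
    · rw [← h]; nlinarith [mul_pos hb h']
  · nlinarith [mul_pos ha h, mul_nonneg hb.le hq]

lemma add_mem_of_cone {R : Set (ℤ × ℤ)} (hR : ParentClosed R) {p q : ℤ × ℤ}
    (hd : latDet p q = 1) (hs : SQ p q) :
    ∀ n : ℕ, ∀ u ∈ R, nrm u ≤ n → 0 < latDet p u → 0 < latDet u q → p + q ∈ R := by
  intro n
  obtain ⟨s, hs1, sp, sq⟩ := sign_aux _ _ hs.1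
  obtain ⟨t, ht1, tp, tq⟩ := sign_aux _ _ hs.2
  have hd' : p.1 * q.2 - p.2 * q.1 = 1 := hd
  induction n with
  | zero =>
    intro u hu hn h1 h2
    exfalso
    have e1 : u.1 = 0 := by unfold nrm at hn; omega
    have e2 : u.2 = 0 := by unfold nrm at hn; omega
    simp [latDet, e1, e2] at h1
  | succ n ih =>
    intro u hu hn h1 h2
    obtain ⟨e1, e2⟩ := expand hd u
    have u1 : 0 < s * u.1 := by
      rw [e1]; exact cone_interior hs1 h2 h1 sp sq hd'
    have u2 : 0 < t * u.2 := by
      rw [e2]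
      exact cone_interior (q2 := -q.1) (p2 := -p.1) ht1 h2 h1 tp tq (by linarith)
    rcases hR u hu with hx | ⟨p', hp', q', hq', hd2, hs2, rfl⟩
    · exfalso
      rcases hx with rfl | rfl | rfl | rfl <;> simp at u1 u2
    · have hN := nrm_add hs2
      have hp0 := nrm_pos_left hd2
      have hq0 := nrm_pos_right hd2
      obtain ⟨sp', sq'⟩ := sign_split s p'.1 q'.1 hs1 hs2.1 u1
      obtain ⟨tp', tq'⟩ := sign_split t p'.2 q'.2 ht1 hs2.2 u2
      have hd2' : p'.1 * q'.2 - p'.2 * q'.1 = 1 := hd2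
      have lp := sgn_comb_pos hs1 ht1 sp tp hd'
      have lq := sgn_comb_pos (q1 := -p.1) (q2 := -p.2) hs1 ht1 sq tq (by linarith)
      have lp' := sgn_comb_pos hs1 ht1 sp' tp' hd2'
      have lq' := sgn_comb_pos (q1 := -p'.1) (q2 := -p'.2) hs1 ht1 sq' tq' (by linarith)
      obtain ⟨e1', e2'⟩ := expand hd p'
      obtain ⟨e1'', e2''⟩ := expand hd q'
      have eD : latDet p' q * latDet p q' - latDet q' q * latDet p p' = 1 := by
        have : latDet p' q * latDet p q' - latDet q' q * latDet p p'
          = latDet p q * latDet p' q' := by unfold latDet; ring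
        rw [this, hd, hd2]; norm_num
      have eA : latDet (p' + q') q = latDet p' q + latDet q' q := by
        simp only [latDet, Prod.fst_add, Prod.snd_add]; ring
      have eB : latDet p (p' + q') = latDet p p' + latDet p q' := by
        simp only [latDet, Prod.fst_add, Prod.snd_add]; ring
      rw [eA] at h2
      rw [eB] at h1
      have k1 : 0 < latDet p' q * (s * p.1 + t * p.2) + latDet p p' * (s * q.1 + t * q.2) := by
        have : latDet p' q * (s * p.1 + t * p.2) + latDet p p' * (s * q.1 + t * q.2)
          = s * (latDet p' q * p.1 + latDet p p' * q.1)
            + t * (latDet p' q * p.2 + latDet p p' * q.2) := by ring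
        rw [this, ← e1', ← e2']; exact lp'
      have k2 : 0 < latDet q' q * (s * p.1 + t * p.2) + latDet p q' * (s * q.1 + t * q.2) := by
        have : latDet q' q * (s * p.1 + t * p.2) + latDet p q' * (s * q.1 + t * q.2)
          = s * (latDet q' q * p.1 + latDet p q' * q.1)
            + t * (latDet q' q * p.2 + latDet p q' * q.2) := by ring
        rw [this, ← e1'', ← e2'']; exact lq'
      obtain ⟨n1, n2, n3, n4⟩ := coords_nonneg _ _ _ _ _ _ lp lq eD h2 h1 k1 k2
      by_cases c1 : 0 < latDet p' q ∧ 0 < latDet p p'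
      · exact ih p' hp' (by omega) c1.2 c1.1
      by_cases c2 : 0 < latDet q' q ∧ 0 < latDet p q'
      · exact ih q' hq' (by omega) c2.2 c2.1
      -- both parents on the boundary
      have g1 : 0 < latDet p' q := by
        by_contra h
        have h0 : latDet p' q = 0 := by omega
        rw [h0] at eD
        nlinarith
      have g2 : latDet p p' = 0 := by
        by_contra h
        exact c1 ⟨g1, by omega⟩
      have g3 : 0 < latDet p q' := by omega
      have g4 : latDet q' q = 0 := by
        by_contra h
        exact c2 ⟨by omega, g3⟩
      rw [g4] at eD
      have g5 : latDet p' q * latDet p q' = 1 := by linarith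
      have g6 : latDet p' q = 1 := by
        rcases Int.eq_one_or_neg_one_of_mul_eq_one g5 with h | h <;> omega
      have g7 : latDet p q' = 1 := by
        rw [g6, one_mul] at g5; exact g5
      rw [g6, g2] at e1' e2'
      rw [g4, g7] at e1'' e2''
      have : p = p' := Prod.ext (by linarith) (by linarith)
      have h' : q = q' := Prod.ext (by linarith) (by linarith)
      rw [this, h']; exact hu

/-- The invariant. -/
structure FanInv (R : Set (ℤ × ℤ)) : Prop where
  axes : axesSet ⊆ R
  fin : R.Finite
  prim : ∀ u ∈ R, IsCoprime u.1 u.2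
  pc : ParentClosed R
  adj : ∀ v ∈ R, ∀ w ∈ R, 0 < latDet v w →
    (∀ u ∈ R, ¬ (0 < latDet v u ∧ 0 < latDet u w)) → latDet v w = 1

lemma adj_SQ {R : Set (ℤ × ℤ)} (hR : axesSet ⊆ R) {v w : ℤ × ℤ} (hd : 0 < latDet v w)
    (h : ∀ u ∈ R, ¬ (0 < latDet v u ∧ 0 < latDet u w)) : SQ v w := by
  have a := h (1, 0) (hR (by simp [axesSet]))
  have b := h (0, 1) (hR (by simp [axesSet]))
  have c := h (-1, 0) (hR (by simp [axesSet]))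
  have d := h (0, -1) (hR (by simp [axesSet]))
  simp only [latDet] at a b c d hd
  constructor
  · by_contra hh
    rcases mul_neg_iff.1 (not_le.1 hh) with ⟨_, _⟩ | ⟨_, _⟩
    · exact b ⟨by omega, by omega⟩
    · exact d ⟨by omega, by omega⟩
  · by_contra hh
    rcases mul_neg_iff.1 (not_le.1 hh) with ⟨_, _⟩ | ⟨_, _⟩
    · exact c ⟨by omega, by omega⟩
    · exact a ⟨by omega, by omega⟩

lemma prim_of_det {v w : ℤ × ℤ} (h : latDet v w = 1) : IsCoprime v.1 v.2 :=
  ⟨w.2, -w.1, by unfold latDet at h; linarith⟩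

lemma eq_or_neg_of_det_zero {v w : ℤ × ℤ} (hv : IsCoprime v.1 v.2) (hw : IsCoprime w.1 w.2)
    (h : latDet v w = 0) : v = w ∨ v = -w := by
  obtain ⟨a, b, hab⟩ := hv
  obtain ⟨c, d, hcd⟩ := hw
  unfold latDet at h
  -- w = k v with k = a w1 + b w2
  have w1 : w.1 = (a * w.1 + b * w.2) * v.1 := by
    linear_combination (-w.1) * hab - b * h
  have w2 : w.2 = (a * w.1 + b * w.2) * v.2 := by
    linear_combination (-w.2) * hab + a * h
  have hu : (a * w.1 + b * w.2) * (c * v.1 + d * v.2) = 1 := by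
    linear_combination hcd - c * w1 - d * w2
  rcases Int.isUnit_iff.1 (IsUnit.of_mul_eq_one _ hu) with k | k
  · left
    rw [k] at w1 w2
    exact Prod.ext (by linarith) (by linarith)
  · right
    rw [k] at w1 w2
    exact Prod.ext (by simp; linarith) (by simp; linarith)

lemma latDet_neg_right (v w : ℤ × ℤ) : latDet v (-w) = - latDet v w := by
  simp [latDet]; ring
lemma latDet_neg_left (v w : ℤ × ℤ) : latDet (-v) w = - latDet v w := by
  simp [latDet]; ring
lemma latDet_add_right (v w x : ℤ × ℤ) : latDet v (w + x) = latDet v w + latDet v x := by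
  simp [latDet]; ring
lemma latDet_add_left (v w x : ℤ × ℤ) : latDet (v + w) x = latDet v x + latDet w x := by
  simp [latDet]; ring
lemma latDet_self (v : ℤ × ℤ) : latDet v v = 0 := by
  simp [latDet]; ring
lemma latDet_swap (v w : ℤ × ℤ) : latDet v w = - latDet w v := by
  simp [latDet]; ring

lemma FanInv.step {R : Set (ℤ × ℤ)} (hR : FanInv R) {v w : ℤ × ℤ} (h : AdjacentPair R v w) :
    FanInv (R ∪ {v + w}) := by
  obtain ⟨hv, hw, hd, hc⟩ := adjacentPair_iff.1 h
  have h1 := hR.adj v hv w hw hd hc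
  have hsq := adj_SQ hR.axes hd hc
  refine ⟨fun x hx => Or.inl (hR.axes hx), hR.fin.union (Set.finite_singleton _), ?_, ?_, ?_⟩
  · rintro u (hu | hu)
    · exact hR.prim u hu
    · rw [Set.mem_singleton_iff] at hu
      subst hu
      apply prim_of_det (w := w)
      rw [latDet_add_left, h1, latDet_self]; norm_num
  · rintro u (hu | hu)
    · rcases hR.pc u hu with hx | ⟨p, hp, q, hq, hh⟩
      · exact Or.inl hx
      · exact Or.inr ⟨p, Or.inl hp, q, Or.inl hq, hh⟩
    · exact Or.inr ⟨v, Or.inl hv, w, Or.inl hw, h1, hsq, hu⟩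
  · rintro x (hx | hx) y (hy | hy) hxy hcone
    · exact hR.adj x hx y hy hxy (fun u hu => hcone u (Or.inl hu))
    · rw [Set.mem_singleton_iff] at hy
      subst hy
      -- x, v + w
      have c1 := hcone v (Or.inl hv)
      have c2 := hc x hx
      have e1 : latDet v (v + w) = 1 := by rw [latDet_add_right, latDet_self, h1]; norm_num
      have e2 := latDet_add_right x v w
      have e3 := latDet_swap x v
      have e0 : latDet v x = 0 := by omega
      rcases eq_or_neg_of_det_zero (hR.prim v hv) (hR.prim x hx) e0 with e | e
      · rw [← e]; exact e1
      · have h1' := h1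
        rw [e, latDet_neg_left] at h1'
        omega
    · rw [Set.mem_singleton_iff] at hx
      subst hx
      have c1 := hcone w (Or.inl hw)
      have c2 := hc y hy
      have e1 : latDet (v + w) w = 1 := by rw [latDet_add_left, latDet_self, h1]; norm_num
      have e2 := latDet_add_left v w y
      have e3 := latDet_swap y w
      have e0 : latDet w y = 0 := by omega
      rcases eq_or_neg_of_det_zero (hR.prim w hw) (hR.prim y hy) e0 with e | e
      · rw [← e]; exact e1
      · have h1' := h1
        rw [e, latDet_neg_right] at h1'
        omega
    · rw [Set.mem_singleton_iff] at hx hy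
      rw [hx, hy, latDet_self] at hxy
      omega

lemma FanInv.base : FanInv axesSet := by
  refine ⟨subset_rfl, ?_, ?_, fun u hu => Or.inl hu, ?_⟩
  · simp [axesSet]
  · rintro u (rfl | rfl | rfl | rfl) <;> simp [isCoprime_zero_left, isCoprime_zero_right]
  · rintro v (rfl | rfl | rfl | rfl) w (rfl | rfl | rfl | rfl) h _ <;> simp [latDet] at h ⊢

lemma FanInv.seq (m : ℕ) : ∀ R, BlowUpSeq m axesSet R → FanInv R := by
  induction m with
  | zero => intro R h; rw [show R = axesSet from h]; exact FanInv.base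
  | succ m ih =>
    rintro R ⟨R', h1, v, w, hvw, rfl⟩
    exact (ih R' h1).step hvw

lemma BlowUpSeq.cons {r : ℕ} : ∀ {R R' T : Set (ℤ × ℤ)}, BlowUpStep R R' → BlowUpSeq r R' T →
    BlowUpSeq (r + 1) R T := by
  induction r with
  | zero => intro R R' T h1 h2; rw [show T = R' from h2]; exact ⟨R, rfl, h1⟩
  | succ r ih =>
    rintro R R' T h1 ⟨R'', h2, h3⟩
    exact ⟨R'', ih h1 h2, h3⟩

lemma reach {T : Set (ℤ × ℤ)} (hT : T.Finite) (hpc : ParentClosed T) :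
    ∀ n : ℕ, ∀ R, FanInv R → R ⊆ T → (T \ R).ncard = n → ∃ r, BlowUpSeq r R T := by
  intro n
  induction n with
  | zero =>
    intro R _ hs hn
    have : T \ R = ∅ := (Set.ncard_eq_zero (hT.subset Set.sdiff_subset)).1 hn
    exact ⟨0, Set.Subset.antisymm (Set.sdiff_eq_empty.1 this) hs⟩
  | succ n ih =>
    intro R hR hs hn
    have hfin : (T \ R).Finite := hT.subset Set.sdiff_subset
    have hne : (T \ R).Nonempty := by
      rw [Set.nonempty_iff_ne_empty]
      intro h
      rw [h] at hn
      simp at hn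
    obtain ⟨x, hx, hmin⟩ := Set.exists_min_image _ nrm hfin hne
    rcases hpc x hx.1 with h0 | ⟨p, hp, q, hq, hd, hsq, rfl⟩
    · exact absurd (hR.axes h0) hx.2
    · have hN := nrm_add hsq
      have hp0 := nrm_pos_left hd
      have hq0 := nrm_pos_right hd
      have hpR : p ∈ R := by
        by_contra h
        have := hmin p ⟨hp, h⟩
        omega
      have hqR : q ∈ R := by
        by_contra h
        have := hmin q ⟨hq, h⟩
        omega
      have hadj : AdjacentPair R p q := by
        rw [adjacentPair_iff]
        refine ⟨hpR, hqR, by omega, ?_⟩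
        rintro u hu ⟨h1, h2⟩
        exact hx.2 (add_mem_of_cone hR.pc hd hsq _ u hu le_rfl h1 h2)
      obtain ⟨r, hr⟩ := ih (R ∪ {p + q}) (hR.step hadj)
        (Set.union_subset hs (Set.singleton_subset_iff.2 hx.1)) (by
          rw [← Set.sdiff_sdiff, Set.ncard_sdiff_singleton_of_mem hx, hn]; rfl)
      exact ⟨r + 1, BlowUpSeq.cons ⟨p, q, hadj, rfl⟩ hr⟩

/-- Consecutive entries of a list. -/
def Consec : List (ℤ × ℤ) → ℤ × ℤ → ℤ × ℤ → Prop
  | a :: b :: t, p, q => (p = a ∧ q = b) ∨ Consec (b :: t) p q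
  | _, _, _ => False

lemma consec_mem : ∀ {L : List (ℤ × ℤ)} {p q : ℤ × ℤ}, Consec L p q → p ∈ L ∧ q ∈ L
  | [], _, _, h => by simp [Consec] at h
  | [a], _, _, h => by simp [Consec] at h
  | a :: b :: t, p, q, h => by
    rcases h with ⟨rfl, rfl⟩ | h
    · simp
    · have := consec_mem h
      exact ⟨List.mem_cons_of_mem _ this.1, List.mem_cons_of_mem _ this.2⟩

lemma mediantInsert_head (b : ℤ × ℤ) (t : List (ℤ × ℤ)) :
    ∃ t', mediantInsert (b :: t) = b :: t' := by
  cases t with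
  | nil => exact ⟨[], rfl⟩
  | cons c t => exact ⟨_, rfl⟩

lemma consec_mediant : ∀ (L : List (ℤ × ℤ)) (p q : ℤ × ℤ), Consec (mediantInsert L) p q ↔
    ∃ a b, Consec L a b ∧ ((p = a ∧ q = a + b) ∨ (p = a + b ∧ q = b))
  | [], p, q => by simp [mediantInsert, Consec]
  | [a], p, q => by simp [mediantInsert, Consec]
  | a :: b :: t, p, q => by
    have ih := consec_mediant (b :: t) p q
    obtain ⟨t', ht⟩ := mediantInsert_head b t
    rw [mediantInsert]
    rw [ht] at ih ⊢
    simp only [Consec] at ih ⊢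
    rw [ih]
    constructor
    · rintro (h | h | ⟨c, d, h, h'⟩)
      · exact ⟨a, b, Or.inl ⟨rfl, rfl⟩, Or.inl h⟩
      · exact ⟨a, b, Or.inl ⟨rfl, rfl⟩, Or.inr h⟩
      · exact ⟨c, d, Or.inr h, h'⟩
    · rintro ⟨c, d, ⟨rfl, rfl⟩ | h, h'⟩
      · rcases h' with h' | h'
        · exact Or.inl h'
        · exact Or.inr (Or.inl h')
      · exact Or.inr (Or.inr ⟨c, d, h, h'⟩)

lemma mem_mediant : ∀ (L : List (ℤ × ℤ)) (x : ℤ × ℤ), x ∈ mediantInsert L ↔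
    x ∈ L ∨ ∃ a b, Consec L a b ∧ x = a + b
  | [], x => by simp [mediantInsert, Consec]
  | [a], x => by simp [mediantInsert, Consec]
  | a :: b :: t, x => by
    have ih := mem_mediant (b :: t) x
    rw [mediantInsert, List.mem_cons, List.mem_cons, ih]
    simp only [Consec]
    constructor
    · rintro (h | h | h | ⟨c, d, h, h'⟩)
      · left; simp [h]
      · exact Or.inr ⟨a, b, Or.inl ⟨rfl, rfl⟩, h⟩
      · left; exact List.mem_cons_of_mem _ h
      · exact Or.inr ⟨c, d, Or.inr h, h'⟩
    · rintro (h | ⟨c, d, ⟨rfl, rfl⟩ | h, h'⟩)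
      · rcases List.mem_cons.1 h with h | h
        · exact Or.inl h
        · exact Or.inr (Or.inr (Or.inl h))
      · exact Or.inr (Or.inl h')
      · exact Or.inr (Or.inr (Or.inr ⟨c, d, h, h'⟩))

lemma rayList_mono_succ (j : ℕ) {x : ℤ × ℤ} (h : x ∈ rayList j) : x ∈ rayList (j + 1) :=
  (mem_mediant _ _).2 (Or.inl h)

lemma rayList_mono {i j : ℕ} (hij : i ≤ j) {x : ℤ × ℤ} (h : x ∈ rayList i) : x ∈ rayList j := by
  induction hij with
  | refl => exact h
  | step _ ih => exact rayList_mono_succ _ ih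

lemma consec_det (j : ℕ) : ∀ p q, Consec (rayList j) p q → latDet p q = 1 := by
  induction j with
  | zero =>
    intro p q h
    simp only [rayList, Consec, or_false] at h
    obtain ⟨rfl, rfl⟩ := h
    simp [latDet]
  | succ j ih =>
    intro p q h
    obtain ⟨a, b, hab, ⟨rfl, rfl⟩ | ⟨rfl, rfl⟩⟩ := (consec_mediant _ _ _).1 h
    · rw [latDet_add_right, latDet_self, ih _ _ hab]; rfl
    · rw [latDet_add_left, latDet_self, ih _ _ hab]; rfl

lemma rayList_nonneg (j : ℕ) : ∀ x ∈ rayList j, 0 ≤ x.1 ∧ 0 ≤ x.2 := by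
  induction j with
  | zero => intro x h; simp only [rayList, List.mem_cons, List.not_mem_nil, or_false] at h; rcases h with rfl | rfl <;> simp
  | succ j ih =>
    intro x h
    rcases (mem_mediant _ _).1 h with h | ⟨a, b, hab, rfl⟩
    · exact ih x h
    · obtain ⟨ha, hb⟩ := consec_mem hab
      have := ih a ha
      have := ih b hb
      simp only [Prod.fst_add, Prod.snd_add]
      omega

lemma rayList_parent (j : ℕ) : ∀ x ∈ rayList j, x = (1, 0) ∨ x = (0, 1) ∨
    ∃ p ∈ rayList j, ∃ q ∈ rayList j, latDet p q = 1 ∧ x = p + q := by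
  induction j with
  | zero => intro x h; simp only [rayList, List.mem_cons, List.not_mem_nil, or_false] at h; tauto
  | succ j ih =>
    intro x h
    rcases (mem_mediant _ _).1 h with h | ⟨a, b, hab, rfl⟩
    · rcases ih x h with h | h | ⟨p, hp, q, hq, hh⟩
      · exact Or.inl h
      · exact Or.inr (Or.inl h)
      · exact Or.inr (Or.inr ⟨p, rayList_mono_succ _ hp, q, rayList_mono_succ _ hq, hh⟩)
    · obtain ⟨ha, hb⟩ := consec_mem hab
      exact Or.inr (Or.inr ⟨a, rayList_mono_succ _ ha, b, rayList_mono_succ _ hb,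
        consec_det _ _ _ hab, rfl⟩)

lemma rayList_complete_aux (u : ℤ × ℤ) (hu : IsCoprime u.1 u.2) (h1 : 0 ≤ u.1) (h2 : 0 ≤ u.2)
    (j : ℕ) : u ∈ rayList j ∨ ∃ p q, Consec (rayList j) p q ∧ 0 < latDet p u ∧ 0 < latDet u q ∧
      (j : ℤ) + 2 ≤ p.1 + p.2 + q.1 + q.2 := by
  induction j with
  | zero =>
    rcases h1.eq_or_lt with h | h
    · left
      rw [← h, isCoprime_zero_left, Int.isUnit_iff] at hu
      have : u = (0, 1) := Prod.ext h.symm (by simp; omega)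
      simp [rayList, this]
    rcases h2.eq_or_lt with h' | h'
    · left
      rw [← h', isCoprime_zero_right, Int.isUnit_iff] at hu
      have : u = (1, 0) := Prod.ext (by simp; omega) h'.symm
      simp [rayList, this]
    · right
      exact ⟨(1, 0), (0, 1), by simp [rayList, Consec], by simp [latDet, h'], by simp [latDet, h],
        by simp⟩
  | succ j ih =>
    rcases ih with h | ⟨p, q, hc, hp, hq, hn⟩
    · exact Or.inl (rayList_mono_succ _ h)
    · have hd := consec_det _ _ _ hc
      obtain ⟨mp, mq⟩ := consec_mem hc
      have np := rayList_nonneg _ _ mp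
      have nq := rayList_nonneg _ _ mq
      have pp : 0 < p.1 + p.2 := by
        have := nrm_pos_left hd
        unfold nrm at this
        omega
      have pq : 0 < q.1 + q.2 := by
        have := nrm_pos_right hd
        unfold nrm at this
        omega
      have esw := latDet_swap (p + q) u
      rcases lt_trichotomy (latDet (p + q) u) 0 with h | h | h
      · right
        refine ⟨p, p + q, (consec_mediant _ _ _).2 ⟨p, q, hc, Or.inl ⟨rfl, rfl⟩⟩, hp, by omega, ?_⟩
        simp only [Prod.fst_add, Prod.snd_add]; push_cast; omega
      · left
        have hco : IsCoprime (p + q).1 (p + q).2 := by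
          apply prim_of_det (w := q)
          rw [latDet_add_left, latDet_self, hd]; rfl
        have : u = p + q := by
          rcases eq_or_neg_of_det_zero hco hu h with e | e
          · exact e.symm
          · exfalso
            have f1 := congrArg Prod.fst e
            have f2 := congrArg Prod.snd e
            simp only [Prod.fst_add, Prod.snd_add, Prod.fst_neg, Prod.snd_neg] at f1 f2
            omega
        exact (mem_mediant _ _).2 (Or.inr ⟨p, q, hc, this⟩)
      · right
        refine ⟨p + q, q, (consec_mediant _ _ _).2 ⟨p, q, hc, Or.inr ⟨rfl, rfl⟩⟩, h, hq, ?_⟩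
        simp only [Prod.fst_add, Prod.snd_add]; push_cast; omega

lemma rayList_complete (u : ℤ × ℤ) (hu : IsCoprime u.1 u.2) (h1 : 0 ≤ u.1) (h2 : 0 ≤ u.2) :
    u ∈ rayList (nrm u) := by
  rcases rayList_complete_aux u hu h1 h2 (nrm u) with h | ⟨p, q, hc, hp, hq, hn⟩
  · exact h
  · exfalso
    have hd := consec_det _ _ _ hc
    obtain ⟨mp, mq⟩ := consec_mem hc
    have np := rayList_nonneg _ _ mp
    have nq := rayList_nonneg _ _ mq
    obtain ⟨e1, e2⟩ := expand hd u
    have e : (nrm u : ℤ) = u.1 + u.2 := by unfold nrm; omega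
    rw [e] at hn
    nlinarith [mul_nonneg (Int.sub_nonneg_of_le hp) nq.1, mul_nonneg (Int.sub_nonneg_of_le hp) nq.2,
      mul_nonneg (Int.sub_nonneg_of_le hq) np.1, mul_nonneg (Int.sub_nonneg_of_le hq) np.2]

lemma raySet_mono {i j : ℕ} (hij : i ≤ j) : raySet i ⊆ raySet j := by
  rintro x ⟨q, hq, h⟩
  exact ⟨q, rayList_mono hij hq, h⟩

lemma raySet_complete (u : ℤ × ℤ) (hu : IsCoprime u.1 u.2) : u ∈ raySet (nrm u) := by
  have hk : ∀ a : ℤ, ∃ ε : ℤ, (ε = 1 ∨ ε = -1) ∧ a = ε * |a| := by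
    intro a
    rcases le_total 0 a with h | h
    · exact ⟨1, Or.inl rfl, by rw [abs_of_nonneg h]; ring⟩
    · exact ⟨-1, Or.inr rfl, by rw [abs_of_nonpos h]; ring⟩
  obtain ⟨ε₁, h1, e1⟩ := hk u.1
  obtain ⟨ε₂, h2, e2⟩ := hk u.2
  have hm := rayList_complete (|u.1|, |u.2|) (by simpa using hu.abs_abs) (abs_nonneg _)
    (abs_nonneg _)
  have hn : nrm (|u.1|, |u.2|) = nrm u := by simp [nrm, Int.natAbs_abs]
  rw [hn] at hm
  exact ⟨_, hm, ε₁, ε₂, h1, h2, Prod.ext e1 e2⟩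

lemma raySet_finite (j : ℕ) : (raySet j).Finite := by
  have : raySet j ⊆ (fun z : (ℤ × ℤ) × (ℤ × ℤ) => (z.2.1 * z.1.1, z.2.2 * z.1.2)) ''
      ({x | x ∈ rayList j} ×ˢ (({1, -1} : Set ℤ) ×ˢ ({1, -1} : Set ℤ))) := by
    rintro x ⟨q, hq, a, b, ha, hb, rfl⟩
    exact ⟨(q, (a, b)), ⟨hq, ha, hb⟩, rfl⟩
  refine Set.Finite.subset (Set.Finite.image _ ?_) this
  exact (List.finite_toSet _).prod ((Set.toFinite _).prod (Set.toFinite _))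

lemma raySet_pc (j : ℕ) : ParentClosed (raySet j) := by
  rintro u ⟨x, hx, a, b, ha, hb, rfl⟩
  rcases rayList_parent j x hx with rfl | rfl | ⟨p, hp, q, hq, hd, rfl⟩
  · left; rcases ha with rfl | rfl <;> simp [axesSet]
  · left; rcases hb with rfl | rfl <;> simp [axesSet]
  · right
    have np := rayList_nonneg _ _ hp
    have nq := rayList_nonneg _ _ hq
    have mp : (a * p.1, b * p.2) ∈ raySet j := ⟨p, hp, a, b, ha, hb, rfl⟩
    have mq : (a * q.1, b * q.2) ∈ raySet j := ⟨q, hq, a, b, ha, hb, rfl⟩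
    have m1 := mul_nonneg np.1 nq.1
    have m2 := mul_nonneg np.2 nq.2
    have a2 : a * a = 1 := by rcases ha with rfl | rfl <;> rfl
    have b2 : b * b = 1 := by rcases hb with rfl | rfl <;> rfl
    have s1 : 0 ≤ a * p.1 * (a * q.1) := by
      have : a * p.1 * (a * q.1) = (a * a) * (p.1 * q.1) := by ring
      rw [this, a2]; linarith
    have s2 : 0 ≤ b * p.2 * (b * q.2) := by
      have : b * p.2 * (b * q.2) = (b * b) * (p.2 * q.2) := by ring
      rw [this, b2]; linarith
    have hab : a * b = 1 ∨ a * b = -1 := by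
      rcases ha with rfl | rfl <;> rcases hb with rfl | rfl <;> simp
    unfold latDet at hd
    rcases hab with hab | hab
    · refine ⟨_, mp, _, mq, ?_, ⟨s1, s2⟩, ?_⟩
      · simp only [latDet]; linear_combination (a * b) * hd + hab
      · ext <;> simp <;> ring
    · refine ⟨_, mq, _, mp, ?_, ⟨by linarith, by linarith⟩, ?_⟩
      · simp only [latDet]; linear_combination (-a * b) * hd - hab
      · ext <;> simp <;> ring

/-- Let `R ⊆ ℤ²` be obtained from `S_0 = {(1,0),(0,1),(−1,0),(0,−1)}`
(the ray set of the fan of `ℂP¹ × ℂP¹`) by a finite sequence of toric blow-up steps.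
Then there exist a natural number `j` and a further finite sequence of toric blow-up
steps taking `R` to the set `S_j` exactly: every iterated toric blow-up of
`ℂP¹ × ℂP¹` can be further blown up torus-equivariantly to become one of the surfaces
`X_j`. -/
theorem blowup_of_CP1xCP1_reaches_Xj (m : ℕ) (R : Set (ℤ × ℤ))
    (hR : BlowUpSeq m ({(1, 0), (0, 1), (-1, 0), (0, -1)} : Set (ℤ × ℤ)) R) :
    ∃ j r : ℕ, BlowUpSeq r R (raySet j) := by
  have hI : FanInv R := FanInv.seq m R hR
  obtain ⟨j, hj⟩ : ∃ j, ∀ u ∈ R, nrm u ≤ j := by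
    obtain ⟨j, hj⟩ := (hI.fin.image nrm).bddAbove
    exact ⟨j, fun u hu => hj ⟨u, hu, rfl⟩⟩
  have hsub : R ⊆ raySet j := fun u hu =>
    raySet_mono (hj u hu) (raySet_complete u (hI.prim u hu))
  obtain ⟨r, hr⟩ := reach (raySet_finite j) (raySet_pc j) _ R hI hsub rfl
  exact ⟨j, r, hr⟩
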